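/- arXiv:2003.10683 — 2 statements merged into one kernel-verified Lean document; each statement's English description precedes it below -/
import Mathlib

section
/- Let k be a perfect field and let X be a reduced scheme of finite type over k. Then X admits a locally closed stratification with finitely many strata each of which is smooth over k: there exist finitely many pairwise disjoint locally closed subschemes X₁, …, Xₙ of X, each smooth over k, such that every point of X lies in exactly one Xᵢ. -/
open AlgebraicGeometry CategoryTheory

universe u

lemma isReduced_vanishingIdeal_subscheme (X : Scheme.{u}) (T : TopologicalSpace.Closeds X) :
    IsReduced (Scheme.IdealSheafData.vanishingIdeal T).subscheme := by
  let I := Scheme.IdealSheafData.vanishingIdeal T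
  have (U : X.affineOpens) : IsReduced (I.subschemeCover.openCover.X U) := by
    have h : _root_.IsReduced (Γ(X, U) ⧸ I.ideal U) := by
      rw [← Ideal.isRadical_iff_quotient_reduced]
      exact PrimeSpectrum.isRadical_vanishingIdeal _
    have h' : _root_.IsReduced (CommRingCat.of (Γ(X, U) ⧸ I.ideal U)) := h
    exact inferInstanceAs (IsReduced (Spec (.of (Γ(X, U) ⧸ I.ideal U))))
  exact @IsReduced.of_openCover _ I.subschemeCover.openCover this

lemma exists_smooth_stratum (k : Type u) [Field k] [PerfectField k]
    (X : Scheme.{u}) (f : X ⟶ Spec (CommRingCat.of k)) [LocallyOfFiniteType f]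
    (T : TopologicalSpace.Closeds X) (hT : T ≠ ⊥) :
    ∃ (W : Scheme.{u}) (g : W ⟶ X) (T' : TopologicalSpace.Closeds X),
      IsImmersion g ∧ Smooth (g ≫ f) ∧ T' < T ∧
        Set.range g.base = (T : Set X) \ T' := by
  let I := Scheme.IdealSheafData.vanishingIdeal T
  have : IsReduced I.subscheme := isReduced_vanishingIdeal_subscheme X T
  let φ : I.subscheme ⟶ Spec (CommRingCat.of k) := I.subschemeι ≫ f
  have hfp : LocallyOfFinitePresentation φ :=
    LocallyOfFinitePresentation.iff_locallyOfFiniteType.mpr inferInstance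
  have hd := φ.dense_smoothLocus_of_perfectField
  let U := φ.smoothLocus
  have hr : Set.range I.subschemeι = (T : Set X) := by
    rw [Scheme.IdealSheafData.range_subschemeι]
    exact Scheme.IdealSheafData.coe_support_vanishingIdeal T
  let T' : TopologicalSpace.Closeds X := ⟨I.subschemeι '' (U : Set I.subscheme)ᶜ,
    I.subschemeι.isClosedEmbedding.isClosedMap _ U.2.isClosed_compl⟩
  have hinj : Function.Injective I.subschemeι := I.subschemeι.isClosedEmbedding.injective
  have hrg : Set.range (U.ι ≫ I.subschemeι).base = (T : Set X) \ T' := by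
    have h1 : Set.range (U.ι ≫ I.subschemeι) = I.subschemeι '' (U : Set I.subscheme) := by
      rw [Scheme.Hom.comp_base, TopCat.coe_comp, Set.range_comp, U.range_ι]
    change Set.range (U.ι ≫ I.subschemeι) = (T : Set X) \ (I.subschemeι '' (U : Set I.subscheme)ᶜ)
    rw [h1, ← hr, ← Set.image_univ, ← Set.image_diff hinj]
    simp
  have hle : (T' : Set X) ⊆ T := by
    rw [← hr]
    exact Set.image_subset_range _ _
  refine ⟨U, U.ι ≫ I.subschemeι, T', inferInstance, ?_, ?_, hrg⟩
  · rw [Category.assoc]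
    change Smooth (U.ι ≫ φ)
    rw [← Scheme.Hom.smoothLocus_eq_top_iff, ← Scheme.Hom.preimage_smoothLocus_eq]
    exact Scheme.Opens.ι_preimage_self U
  · refine lt_of_le_of_ne hle fun he ↦ hT ?_
    by_contra hne
    have hTne : (T : Set X).Nonempty := by
      rw [Set.nonempty_iff_ne_empty]
      intro h0
      exact hne (TopologicalSpace.Closeds.ext h0)
    rw [← hr] at hTne
    have : Nonempty I.subscheme := Set.range_nonempty_iff_nonempty.mp hTne
    obtain ⟨y, hy⟩ := hd.nonempty
    have hy' : I.subschemeι y ∈ (T' : Set X) := by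
      rw [he, ← hr]
      exact ⟨y, rfl⟩
    obtain ⟨z, hz, hzy⟩ := hy'
    exact hz (hinj hzy ▸ hy)

lemma stratification_aux (k : Type u) [Field k] [PerfectField k]
    (X : Scheme.{u}) (f : X ⟶ Spec (CommRingCat.of k)) [LocallyOfFiniteType f]
    [IsNoetherian X] (T : TopologicalSpace.Closeds X) :
    ∃ (n : ℕ) (Z : Fin n → Scheme.{u}) (g : ∀ i, Z i ⟶ X),
      (∀ i, IsImmersion (g i)) ∧
      (∀ i, Smooth (g i ≫ f)) ∧
      (∀ i j, i ≠ j → Disjoint (Set.range (g i).base) (Set.range (g j).base)) ∧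
      (⋃ i, Set.range (g i).base) = (T : Set X) := by
  induction T using WellFoundedLT.induction with
  | ind T ih =>
  by_cases hT : T = ⊥
  · subst hT
    exact ⟨0, fun i ↦ i.elim0, fun i ↦ i.elim0, fun i ↦ i.elim0, fun i ↦ i.elim0,
      fun i ↦ i.elim0, by simp⟩
  obtain ⟨W, w, T', hw1, hw2, hlt, hw3⟩ := exists_smooth_stratum k X f T hT
  obtain ⟨n, Z, g, h1, h2, h3, h4⟩ := ih T' hlt
  have hsub (i) : Set.range (g i).base ⊆ (T' : Set X) :=
    h4 ▸ Set.subset_iUnion (fun i ↦ Set.range (g i).base) i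
  have hdis (i) : Disjoint (Set.range w.base) (Set.range (g i).base) := by
    rw [hw3]
    exact Set.disjoint_sdiff_left.mono_right (hsub i)
  refine ⟨n + 1, Fin.cons W Z, Fin.cons w g, ?_, ?_, ?_, ?_⟩
  · intro i
    cases i using Fin.cases with
    | zero => exact hw1
    | succ i => exact h1 i
  · intro i
    cases i using Fin.cases with
    | zero => exact hw2
    | succ i => exact h2 i
  · intro i j hij
    cases i using Fin.cases with
    | zero =>
      cases j using Fin.cases with
      | zero => exact absurd rfl hij
      | succ j => exact hdis j
    | succ i =>
      cases j using Fin.cases with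
      | zero => exact (hdis i).symm
      | succ j => exact h3 i j (fun h ↦ hij (h ▸ rfl))
  · ext x
    rw [Set.mem_iUnion, Fin.exists_fin_succ]
    change (x ∈ Set.range w.base ∨ ∃ i, x ∈ Set.range (g i).base) ↔ _
    rw [← Set.mem_iUnion, h4, hw3, ← Set.mem_union, Set.diff_union_of_subset hlt.le]

/-- Let `k` be a perfect field and `X` a reduced scheme of finite type over
`k` (the structure morphism `f` is locally of finite type and quasi-compact). Then `X` admits
a finite stratification by locally closed subschemes, each smooth over `k`: there are finitely
many locally closed immersions `gᵢ : Zᵢ ⟶ X` with `Zᵢ` smooth over `k`, whose set-theoretic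
images are pairwise disjoint and cover `X` (so every point of `X` lies in exactly one
stratum). -/
theorem exists_finite_smooth_stratification (k : Type u) [Field k] [PerfectField k]
    (X : Scheme.{u}) (f : X ⟶ Spec (CommRingCat.of k))
    [IsReduced X] [LocallyOfFiniteType f] [QuasiCompact f] :
    ∃ (n : ℕ) (Z : Fin n → Scheme.{u}) (g : ∀ i, Z i ⟶ X),
      (∀ i, IsImmersion (g i)) ∧
      (∀ i, IsSmooth (g i ≫ f)) ∧
      (∀ i j, i ≠ j → Disjoint (Set.range (g i).base) (Set.range (g j).base)) ∧
      (⋃ i, Set.range (g i).base) = Set.univ := by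
  have : CompactSpace X := by
    have := QuasiCompact.isCompact_preimage (f := f) Set.univ isOpen_univ isCompact_univ
    exact ⟨by simpa using this⟩
  have : IsNoetherian X := { __ := LocallyOfFiniteType.isLocallyNoetherian f }
  obtain ⟨n, Z, g, h1, h2, h3, h4⟩ := stratification_aux k X f ⊤
  exact ⟨n, Z, g, h1, h2, h3, by simpa using h4⟩
end

section
/- Let k be a perfect field. Let K₀(Var_k) be the abelian group generated by isomorphism classes {X} of k-schemes X of finite type, modulo the relations {X} = {Y} + {X ∖ Y} for every closed subscheme Y of X, and let K′₀(Var_k) be the abelian group generated by isomorphism classes {X} of smooth k-schemes of finite type, modulo the relations {X} = {Y} + {X ∖ Y} for every closed embedding of smooth k-schemes Y ↪ X. Then the canonical group homomorphism K′₀(Var_k) → K₀(Var_k), sending the class of a smooth finite-type k-scheme to its class, is an isomorphism. -/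
open AlgebraicGeometry CategoryTheory

universe u

variable (k : Type u) [Field k]

/-- A scheme of finite type over `k`: a scheme together with a structure morphism to
`Spec k` which is locally of finite type and quasi-compact. -/
structure FTScheme where
  X : Scheme.{u}
  p : X ⟶ Spec (CommRingCat.of k)
  lft : LocallyOfFiniteType p
  qc : QuasiCompact p

/-- A smooth scheme of finite type over `k`. -/
structure SmFTScheme extends FTScheme k where
  smooth : IsSmooth p

/-- The relators defining `K₀(Var_k)`: for every two isomorphic finite type `k`-schemes
`A ≅ B` (over `k`) the element `{A} - {B}`, and for every finite type `k`-scheme `W` with a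
closed subscheme `Y ↪ W` (over `k`) with open complement `U` the element `{W} - {Y} - {U}`. -/
def varRelators : Set (FreeAbelianGroup (FTScheme k)) :=
  {r | (∃ A B : FTScheme k, (∃ e : A.X ≅ B.X, e.hom ≫ B.p = A.p) ∧
          r = FreeAbelianGroup.of A - FreeAbelianGroup.of B) ∨
       (∃ (W Y U : FTScheme k) (i : Y.X ⟶ W.X) (j : U.X ⟶ W.X),
          IsClosedImmersion i ∧ IsOpenImmersion j ∧ i ≫ W.p = Y.p ∧ j ≫ W.p = U.p ∧
          Set.range j.base = (Set.range i.base)ᶜ ∧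
          r = FreeAbelianGroup.of W - FreeAbelianGroup.of Y - FreeAbelianGroup.of U)}

/-- `K₀(Var_k)`: the free abelian group on finite type `k`-schemes modulo isomorphism
and the scissor relations. -/
abbrev K0Var := FreeAbelianGroup (FTScheme k) ⧸ AddSubgroup.closure (varRelators k)

/-- The class `{A}` of a finite type `k`-scheme in `K₀(Var_k)`. -/
def clsVar (A : FTScheme k) : K0Var k :=
  QuotientAddGroup.mk (FreeAbelianGroup.of A)

/-- The relators defining `K′₀(Var_k)`: for every two isomorphic smooth finite type
`k`-schemes `A ≅ B` (over `k`) the element `{A} - {B}`, and for every closed immersion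
`Y ↪ W` of smooth finite type `k`-schemes (over `k`) with open complement `U` (a smooth
finite type `k`-scheme) the element `{W} - {Y} - {U}`. -/
def smVarRelators : Set (FreeAbelianGroup (SmFTScheme k)) :=
  {r | (∃ A B : SmFTScheme k, (∃ e : A.X ≅ B.X, e.hom ≫ B.p = A.p) ∧
          r = FreeAbelianGroup.of A - FreeAbelianGroup.of B) ∨
       (∃ (W Y U : SmFTScheme k) (i : Y.X ⟶ W.X) (j : U.X ⟶ W.X),
          IsClosedImmersion i ∧ IsOpenImmersion j ∧ i ≫ W.p = Y.p ∧ j ≫ W.p = U.p ∧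
          Set.range j.base = (Set.range i.base)ᶜ ∧
          r = FreeAbelianGroup.of W - FreeAbelianGroup.of Y - FreeAbelianGroup.of U)}

/-- `K′₀(Var_k)`: the free abelian group on smooth finite type `k`-schemes modulo
isomorphism and the scissor relations for closed immersions of smooth schemes. -/
abbrev K0VarSm := FreeAbelianGroup (SmFTScheme k) ⧸ AddSubgroup.closure (smVarRelators k)

/-- The class `{A}` of a smooth finite type `k`-scheme in `K′₀(Var_k)`. -/
def clsSm (A : SmFTScheme k) : K0VarSm k :=
  QuotientAddGroup.mk (FreeAbelianGroup.of A)

open TensorProduct in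
lemma aux_isReduced_etale (P B : Type*) [CommRing P] [IsDomain P] [CommRing B] [Algebra P B]
    [Algebra.Etale P B] : _root_.IsReduced B := by
  let K := FractionRing P
  have h2 : _root_.IsReduced (K ⊗[P] B) :=
    Algebra.FormallyUnramified.isReduced_of_field K (K ⊗[P] B)
  have hflat : Module.Flat P B := Algebra.Smooth.flat P B
  have hinj : Function.Injective (Algebra.TensorProduct.includeRight : B →ₐ[P] K ⊗[P] B) :=
    Algebra.TensorProduct.includeRight_injective (IsFractionRing.injective P K) 
  exact isReduced_of_injective _ hinj

lemma aux_isReduced_smooth (k A : Type*) [Field k] [CommRing A] [Algebra k A]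
    [Algebra.Smooth k A] : _root_.IsReduced A := by
  have key (m : PrimeSpectrum A) : ∃ f ∉ m.asIdeal, _root_.IsReduced (Localization.Away f) := by
    obtain ⟨f, hfm, n, _, _, _⟩ :=
      Algebra.IsSmoothAt.exists_isStandardEtale_mvPolynomial (R := k) (p := m.asIdeal)
    exact ⟨f, hfm, aux_isReduced_etale (MvPolynomial (Fin n) k) _⟩
  refine ⟨fun x hx => ?_⟩
  by_contra h0
  have hne : Ideal.span {x} ≠ ⊥ := by simpa using h0
  have hann : Submodule.annihilator (Ideal.span {x}) ≠ ⊤ := by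
    intro h
    rw [Submodule.annihilator_eq_top_iff] at h
    exact hne h
  obtain ⟨m, hm, hle⟩ := Ideal.exists_le_maximal _ hann
  obtain ⟨f, hf, hred⟩ := key ⟨m, hm.isPrime⟩
  have h1 : algebraMap A (Localization.Away f) x = 0 :=
    (hx.map (algebraMap A (Localization.Away f))).eq_zero
  rw [IsLocalization.map_eq_zero_iff (Submonoid.powers f)] at h1
  obtain ⟨⟨_, n, rfl⟩, hc⟩ := h1
  have : f ^ n ∈ m := hle (by
    rw [Submodule.mem_annihilator_span_singleton]; simpa using hc)
  exact hf (hm.isPrime.mem_of_pow_mem n this)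

lemma aux_isReduced_of_smooth {k : Type u} [Field k] {X : Scheme.{u}}
    (p : X ⟶ Spec (CommRingCat.of k)) [Smooth p] : IsReduced X := by
  refine @IsReduced.of_openCover _ X.affineCover (fun i => ?_)
  have hs : Smooth (X.affineCover.f i ≫ p) := inferInstance
  obtain ⟨R, g, hR⟩ : ∃ (R : CommRingCat.{u}) (g : Spec R ⟶ Spec (CommRingCat.of k)),
      Smooth g ∧ (IsReduced (Spec R) → IsReduced (X.affineCover.X i)) :=
    ⟨_, X.affineCover.f i ≫ p, hs, id⟩
  obtain ⟨hg, h⟩ := hR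
  apply h
  obtain ⟨φ, rfl⟩ := Spec.map_surjective g
  rw [HasRingHomProperty.Spec_iff (P := @Smooth)] at hg
  rw [affine_isReduced_iff]
  algebraize [φ.hom]
  exact aux_isReduced_smooth k R

lemma aux_isReduced_subscheme (X : Scheme.{u}) :
    IsReduced (X.nilradical).subscheme := by
  refine @IsReduced.of_openCover _ (X.nilradical.subschemeCover.openCover) (fun U => ?_)
  change IsReduced (Spec (.of (Γ(X, U.1) ⧸ X.nilradical.ideal U)))
  rw [affine_isReduced_iff]
  change _root_.IsReduced (Γ(X, U.1) ⧸ X.nilradical.ideal U)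
  rw [← Ideal.isRadical_iff_quotient_reduced]
  exact Ideal.radical_isRadical _

section Aux

open Limits

variable {k}

/-- `Y` closed in `W` with open complement `U`. -/
def Dec (W Y U : FTScheme k) : Prop :=
  ∃ (i : Y.X ⟶ W.X) (j : U.X ⟶ W.X),
    IsClosedImmersion i ∧ IsOpenImmersion j ∧ i ≫ W.p = Y.p ∧ j ≫ W.p = U.p ∧
    Set.range j = (Set.range i)ᶜ

/-- Isomorphism over `k`. -/
def FIso (A B : FTScheme k) : Prop := ∃ e : A.X ≅ B.X, e.hom ≫ B.p = A.p

lemma FIso.symm {A B : FTScheme k} (h : FIso A B) : FIso B A := by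
  obtain ⟨e, he⟩ := h
  exact ⟨e.symm, by simp [← he]⟩

lemma FTScheme.isLocallyNoetherian (A : FTScheme k) : IsLocallyNoetherian A.X :=
  have := A.lft
  LocallyOfFiniteType.isLocallyNoetherian A.p

lemma FTScheme.isNoetherian (A : FTScheme k) : IsNoetherian A.X := by
  have := A.isLocallyNoetherian
  have := A.qc
  have : CompactSpace A.X := (quasiCompact_iff_compactSpace (f := A.p)).mp A.qc
  exact {}

lemma FTScheme.smooth_of_isOpenImmersion {A : FTScheme k} {T : Scheme.{u}} (f : T ⟶ A.X)
    [IsOpenImmersion f] : QuasiCompact f := by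
  have := A.isLocallyNoetherian
  infer_instance

/-- Restrict along a finite type morphism. -/
noncomputable abbrev FTScheme.res (A : FTScheme k) {T : Scheme.{u}} (f : T ⟶ A.X)
    (h1 : LocallyOfFiniteType f) (h2 : QuasiCompact f) : FTScheme k where
  X := T
  p := f ≫ A.p
  lft := have := A.lft; inferInstance
  qc := have := A.qc; inferInstance

/-- Restriction along a closed immersion. -/
noncomputable abbrev FTScheme.cl (A : FTScheme k) {T : Scheme.{u}} (f : T ⟶ A.X)
    (h1 : IsClosedImmersion f) : FTScheme k := A.res f inferInstance inferInstance

/-- Restriction along an open immersion. -/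
noncomputable abbrev FTScheme.op (A : FTScheme k) {T : Scheme.{u}} (f : T ⟶ A.X)
    (h1 : IsOpenImmersion f) : FTScheme k :=
  A.res f inferInstance (FTScheme.smooth_of_isOpenImmersion f)

lemma range_fst_compl {X S Z V : Scheme.{u}} (s : S ⟶ X) (z : Z ⟶ X) (v : V ⟶ X)
    (h : Set.range v = (Set.range z)ᶜ) :
    Set.range (pullback.fst s v) = (Set.range (pullback.fst s z))ᶜ := by
  rw [Scheme.Pullback.range_fst, Scheme.Pullback.range_fst, h, Set.preimage_compl]

lemma range_snd_compl {X S Z V : Scheme.{u}} (s : S ⟶ X) (z : Z ⟶ X) (v : V ⟶ X)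
    (h : Set.range v = (Set.range z)ᶜ) :
    Set.range (pullback.snd v s) = (Set.range (pullback.snd z s))ᶜ := by
  rw [Scheme.Pullback.range_snd, Scheme.Pullback.range_snd, h, Set.preimage_compl]

lemma Dec.grid {X Z V S U : FTScheme k} (h : Dec X Z V) (h' : Dec X S U) :
    ∃ SZ SV UZ UV : FTScheme k, Dec S SZ SV ∧ Dec U UZ UV ∧ Dec Z SZ UZ ∧ Dec V SV UV := by
  obtain ⟨z, v, hz, hv, hzp, hvp, hr⟩ := h
  obtain ⟨s, u, hs, hu, hsp, hup, hr'⟩ := h'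
  refine ⟨S.cl (pullback.fst s z) inferInstance, S.op (pullback.fst s v) inferInstance,
    U.cl (pullback.fst u z) inferInstance, U.op (pullback.fst u v) inferInstance,
    ⟨pullback.fst s z, pullback.fst s v, inferInstance, inferInstance, rfl, rfl, 
      range_fst_compl _ _ _ hr⟩,
    ⟨pullback.fst u z, pullback.fst u v, inferInstance, inferInstance, rfl, rfl, 
      range_fst_compl _ _ _ hr⟩,
    ⟨pullback.snd s z, pullback.snd u z, inferInstance, inferInstance, ?_, ?_, 
      range_snd_compl _ _ _ hr'⟩,
    ⟨pullback.snd s v, pullback.snd u v, inferInstance, inferInstance, ?_, ?_, 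
      range_snd_compl _ _ _ hr'⟩⟩
  · change _ = pullback.fst s z ≫ S.p
    rw [← hzp, ← hsp, pullback.condition_assoc]
  · change _ = pullback.fst u z ≫ U.p
    rw [← hzp, ← hup, pullback.condition_assoc]
  · change _ = pullback.fst s v ≫ S.p
    rw [← hvp, ← hsp, pullback.condition_assoc]
  · change _ = pullback.fst u v ≫ U.p
    rw [← hvp, ← hup, pullback.condition_assoc]

lemma FIso.of_range {X A B : FTScheme k} (a : A.X ⟶ X.X) (b : B.X ⟶ X.X)
    (ha : IsOpenImmersion a) (hb : IsOpenImmersion b) (hap : a ≫ X.p = A.p) (hbp : b ≫ X.p = B.p)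
    (h : Set.range a = Set.range b) : FIso A B := by
  refine ⟨IsOpenImmersion.isoOfRangeEq a b h, ?_⟩
  rw [← hap, ← hbp, IsOpenImmersion.isoOfRangeEq_hom_fac_assoc]

lemma Dec.iso₁ {X X' Z V : FTScheme k} (h : Dec X Z V) (e : FIso X X') : Dec X' Z V := by
  obtain ⟨z, v, hz, hv, hzp, hvp, hr⟩ := h
  obtain ⟨e, he⟩ := e
  refine ⟨z ≫ e.hom, v ≫ e.hom, inferInstance, inferInstance, by simp [he, hzp],
    by simp [he, hvp], ?_⟩
  simp only [Scheme.Hom.comp_base, TopCat.coe_comp, Set.range_comp, hr]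
  exact Set.image_compl_eq e.hom.homeomorph.bijective

lemma Dec.iso₂ {X Z Z' V : FTScheme k} (h : Dec X Z V) (e : FIso Z' Z) : Dec X Z' V := by
  obtain ⟨z, v, hz, hv, hzp, hvp, hr⟩ := h
  obtain ⟨e, he⟩ := e
  refine ⟨e.hom ≫ z, v, inferInstance, inferInstance, by simp [he, hzp],
    hvp, ?_⟩
  rw [hr]
  have : Set.range e.hom = Set.univ := Set.range_eq_univ.mpr e.hom.homeomorph.surjective
  simp only [Scheme.Hom.comp_base, TopCat.coe_comp, Set.range_comp, this, Set.image_univ]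

lemma Dec.iso₃ {X Z V V' : FTScheme k} (h : Dec X Z V) (e : FIso V' V) : Dec X Z V' := by
  obtain ⟨z, v, hz, hv, hzp, hvp, hr⟩ := h
  obtain ⟨e, he⟩ := e
  refine ⟨z, e.hom ≫ v, inferInstance, inferInstance, hzp, by simp [he, hvp], ?_⟩
  rw [← hr]
  have : Set.range e.hom = Set.univ := Set.range_eq_univ.mpr e.hom.homeomorph.surjective
  simp only [Scheme.Hom.comp_base, TopCat.coe_comp, Set.range_comp, this, Set.image_univ]

lemma exists_dec (X Z : FTScheme k) (z : Z.X ⟶ X.X) (hz : IsClosedImmersion z)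
    (hzp : z ≫ X.p = Z.p) :
    ∃ (V : FTScheme k) (v : V.X ⟶ X.X), IsOpenImmersion v ∧ v ≫ X.p = V.p ∧
      Set.range v = (Set.range z)ᶜ := by
  let W : X.X.Opens := ⟨(Set.range z)ᶜ, z.isClosedEmbedding.isClosed_range.isOpen_compl⟩
  exact ⟨X.op W.ι inferInstance, W.ι, inferInstance, rfl, by exact W.range_ι⟩

lemma Dec.assoc {X Z V S Z' : FTScheme k} (h : Dec X Z V) (h' : Dec Z S Z') :
    ∃ X' : FTScheme k, Dec X S X' ∧ Dec X' Z' V := by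
  obtain ⟨z, v, hz, hv, hzp, hvp, hr⟩ := h
  obtain ⟨s, u, hs, hu, hsp, hup, hr'⟩ := h'
  obtain ⟨X', x, hx, hxp, hxr⟩ := exists_dec X S (s ≫ z) inferInstance (by simp [hzp, hsp])
  refine ⟨X', ⟨s ≫ z, x, inferInstance, hx, by simp [hzp, hsp], hxp, hxr⟩, ?_⟩
  have h1 : Dec X' (X'.cl (pullback.fst x z) inferInstance)
      (X'.op (pullback.fst x v) inferInstance) :=
    ⟨pullback.fst x z, pullback.fst x v, inferInstance, inferInstance, rfl, rfl,
      range_fst_compl _ _ _ hr⟩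
  refine (h1.iso₂ (FIso.of_range (X := Z) u (pullback.snd x z) hu inferInstance hup ?_ ?_)).iso₃
    (FIso.of_range (X := V) (𝟙 _) (pullback.snd x v) inferInstance inferInstance (by simp) ?_ ?_)
  · change _ = pullback.fst x z ≫ X'.p
    rw [← hzp, ← hxp, pullback.condition_assoc]
  · rw [hr', Scheme.Pullback.range_snd, hxr]
    simp only [Scheme.Hom.comp_base, TopCat.coe_comp, Set.range_comp, Set.preimage_compl]
    rw [Set.preimage_image_eq _ z.isClosedEmbedding.injective]
  · change _ = pullback.fst x v ≫ X'.p
    rw [← hvp, ← hxp, pullback.condition_assoc]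
  · rw [Scheme.Pullback.range_snd, hxr]
    symm
    rw [show Set.range (𝟙 V.X : V.X ⟶ V.X) = Set.univ from Set.range_eq_univ.mpr (fun a => ⟨a, rfl⟩)]
    rw [Set.eq_univ_iff_forall]
    rintro a ⟨b, hb⟩
    have : v a ∈ (Set.range z)ᶜ := hr ▸ Set.mem_range_self a
    exact this ⟨s b, by simpa using hb⟩

variable (k) in
/-- `Str X a`: `a` is the sum of the classes of the strata of some smooth stratification. -/
inductive Str : FTScheme k → K0VarSm k → Prop
  | empty (X : FTScheme k) (h : IsEmpty X.X) : Str X 0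
  | step (X : FTScheme k) (S : SmFTScheme k) (U : FTScheme k) (a : K0VarSm k)
      (h : Dec X S.toFTScheme U) (hU : Str U a) : Str X (clsSm k S + a)

lemma Str.iso {X X' : FTScheme k} {a : K0VarSm k} (h : Str k X a) (e : FIso X X') :
    Str k X' a := by
  cases h with
  | empty _ h =>
    obtain ⟨e, -⟩ := e
    exact .empty _ ⟨fun x => h.false (e.inv x)⟩
  | step _ S U a h hU => exact .step _ S U a (h.iso₁ e) hU

lemma Dec.iso_of_isEmpty {X Z V : FTScheme k} (h : Dec X Z V) (hZ : IsEmpty Z.X) : FIso V X := by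
  obtain ⟨z, v, hz, hv, hzp, hvp, hr⟩ := h
  refine FIso.of_range (X := X) v (𝟙 _) hv inferInstance hvp (by simp) ?_
  rw [hr, Set.range_eq_empty z, Set.compl_empty]
  exact (Set.range_eq_univ.mpr (fun a => ⟨a, rfl⟩)).symm

lemma Str.concat {X Z V : FTScheme k} {b c : K0VarSm k} (hZ : Str k Z b)
    (hV : Str k V c) (h : Dec X Z V) : Str k X (b + c) := by
  induction hZ generalizing X with
  | empty Z hZ =>
    rw [zero_add]
    exact hV.iso (h.iso_of_isEmpty hZ)
  | step Z S U a h' hU ih =>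
    obtain ⟨X', h1, h2⟩ := h.assoc h'
    rw [add_assoc]
    exact .step _ _ _ _ h1 (ih h2)

lemma clsSm_iso {A B : SmFTScheme k} (h : FIso A.toFTScheme B.toFTScheme) :
    clsSm k A = clsSm k B := by
  rw [clsSm, clsSm, ← sub_eq_zero, ← QuotientAddGroup.mk_sub, QuotientAddGroup.eq_zero_iff]
  exact AddSubgroup.subset_closure (Or.inl ⟨A, B, h, rfl⟩)

lemma clsSm_dec {W Y U : SmFTScheme k} (h : Dec W.toFTScheme Y.toFTScheme U.toFTScheme) :
    clsSm k W = clsSm k Y + clsSm k U := by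
  rw [← sub_eq_zero, ← sub_sub]
  simp only [clsSm]
  rw [← QuotientAddGroup.mk_sub, ← QuotientAddGroup.mk_sub, QuotientAddGroup.eq_zero_iff]
  obtain ⟨i, j, h1, h2, h3, h4, h5⟩ := h
  exact AddSubgroup.subset_closure (Or.inr ⟨W, Y, U, i, j, h1, h2, h3, h4, h5, rfl⟩)

lemma clsVar_iso {A B : FTScheme k} (h : FIso A B) :
    clsVar k A = clsVar k B := by
  rw [clsVar, clsVar, ← sub_eq_zero, ← QuotientAddGroup.mk_sub, QuotientAddGroup.eq_zero_iff]
  exact AddSubgroup.subset_closure (Or.inl ⟨A, B, h, rfl⟩)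

lemma clsVar_dec {W Y U : FTScheme k} (h : Dec W Y U) :
    clsVar k W = clsVar k Y + clsVar k U := by
  rw [← sub_eq_zero, ← sub_sub]
  simp only [clsVar]
  rw [← QuotientAddGroup.mk_sub, ← QuotientAddGroup.mk_sub, QuotientAddGroup.eq_zero_iff]
  obtain ⟨i, j, h1, h2, h3, h4, h5⟩ := h
  exact AddSubgroup.subset_closure (Or.inr ⟨W, Y, U, i, j, h1, h2, h3, h4, h5, rfl⟩)

lemma Dec.of_isEmpty (X : FTScheme k) (h : IsEmpty X.X) : Dec X X X :=
  ⟨𝟙 _, 𝟙 _, inferInstance, inferInstance, by simp, by simp, Set.ext fun x => (h.false x).elim⟩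

lemma clsSm_of_isEmpty (X : SmFTScheme k) (h : IsEmpty X.X) : clsSm k X = 0 :=
  left_eq_add.mp (clsSm_dec (Dec.of_isEmpty X.toFTScheme h))

lemma clsVar_of_isEmpty (X : FTScheme k) (h : IsEmpty X.X) : clsVar k X = 0 :=
  left_eq_add.mp (clsVar_dec (Dec.of_isEmpty X h))

/-- Claim A -/
lemma Str.eq_clsSm {X : FTScheme k} {a : K0VarSm k} (h : Str k X a) (T : SmFTScheme k)
    (t : T.X ⟶ X.X) (ht : IsClosedImmersion t) (hts : Surjective t) (htp : t ≫ X.p = T.p) :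
    a = clsSm k T := by
  induction h generalizing T with
  | empty X h => exact (clsSm_of_isEmpty T ⟨fun x => h.false (t x)⟩).symm
  | step X S U a h hU ih =>
    obtain ⟨s, u, hs, hu, hsp, hup, hr⟩ := h
    have hTs : Smooth T.p := T.smooth
    have hSs : Smooth S.p := S.smooth
    have hred : IsReduced S.X := aux_isReduced_of_smooth S.p
    have hiso : IsIso (pullback.fst s t) := isIso_of_isClosedImmersion_of_surjective _
    let ST : SmFTScheme k :=
      { S.toFTScheme.cl (pullback.fst s t) inferInstance with
        smooth := inferInstanceAs (Smooth (pullback.fst s t ≫ S.p)) }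
    let UT : SmFTScheme k :=
      { T.toFTScheme.op (pullback.snd u t) inferInstance with
        smooth := inferInstanceAs (Smooth (pullback.snd u t ≫ T.p)) }
    have e1 : clsSm k ST = clsSm k S := clsSm_iso ⟨asIso (pullback.fst s t), rfl⟩
    have e2 : clsSm k T = clsSm k ST + clsSm k UT := by
      refine clsSm_dec ⟨pullback.snd s t, pullback.snd u t, inferInstance, inferInstance, ?_, rfl, 
        range_snd_compl _ _ _ hr⟩
      change _ = pullback.fst s t ≫ S.p
      rw [← htp, ← hsp, pullback.condition_assoc]
    rw [e2, e1]
    congr 1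
    refine ih UT (pullback.fst u t) (inferInstanceAs (IsClosedImmersion (pullback.fst u t)))
      (inferInstanceAs (Surjective (pullback.fst u t))) ?_
    change _ = pullback.snd u t ≫ T.p
    rw [← htp, ← hup, pullback.condition_assoc]

lemma Str.of_surj {X : FTScheme k} (T : SmFTScheme k)
    (t : T.X ⟶ X.X) (ht : IsClosedImmersion t) (hts : Surjective t) (htp : t ≫ X.p = T.p) :
    Str k X (clsSm k T) := by
  obtain ⟨V, v, h1, h2, h3⟩ := exists_dec X T.toFTScheme t ht htp
  rw [← add_zero (clsSm k T)]
  refine .step _ _ V _ ⟨t, v, ht, h1, htp, h2, h3⟩ (.empty _ ⟨fun x => ?_⟩)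
  have : v x ∈ (Set.range t)ᶜ := h3 ▸ Set.mem_range_self x
  exact this (t.surjective _)

/-- The reduction. -/
noncomputable abbrev FTScheme.red (X : FTScheme k) : FTScheme k := X.cl X.X.nilradical.subschemeι inferInstance

lemma Str.exists_aux [PerfectField k] (X : FTScheme k) (C : TopologicalSpace.Closeds X.X) :
    ∀ (Y : FTScheme k) (y : Y.X ⟶ X.X), IsClosedImmersion y → y ≫ X.p = Y.p →
      Set.range y = C → ∃ a, Str k Y a := by
  have := X.isNoetherian
  have hwf : WellFoundedLT (TopologicalSpace.Closeds X.X) := inferInstance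
  induction C using hwf.induction with
  | ind C ih =>
  intro Y y hy hyp hC
  by_cases hE : IsEmpty Y.X
  · exact ⟨0, .empty _ hE⟩
  rw [not_isEmpty_iff] at hE
  have hred : IsReduced Y.X.nilradical.subscheme := aux_isReduced_subscheme Y.X
  let r := Y.X.nilradical.subschemeι
  have hrs : Surjective r := ⟨Set.range_eq_univ.mp (by
    rw [Scheme.IdealSheafData.range_subschemeι, Scheme.support_nilradical]; rfl)⟩
  have := Y.lft
  have hlfp : LocallyOfFinitePresentation (r ≫ Y.p) := by
    rw [LocallyOfFinitePresentation.iff_locallyOfFiniteType]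
    infer_instance
  let sm := (r ≫ Y.p).smoothLocus
  have hd : Dense (sm : Set Y.X.nilradical.subscheme) :=
    (r ≫ Y.p).dense_smoothLocus_of_perfectField
  have hne : (sm : Set Y.X.nilradical.subscheme).Nonempty := by
    obtain ⟨x⟩ := hE
    obtain ⟨x', -⟩ := r.surjective x
    have : Nonempty Y.X.nilradical.subscheme := ⟨x'⟩
    exact hd.nonempty
  have hcl : IsClosed (r '' (sm : Set Y.X.nilradical.subscheme)ᶜ) :=
    r.isClosedEmbedding.isClosedMap _ sm.isOpen.isClosed_compl
  let I := Scheme.IdealSheafData.vanishingIdeal (X := Y.X) ⟨_, hcl⟩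
  let Z := Y.cl I.subschemeι inferInstance
  have hIr : Set.range I.subschemeι = r '' (sm : Set Y.X.nilradical.subscheme)ᶜ := by
    rw [Scheme.IdealSheafData.range_subschemeι]
    rfl
  obtain ⟨V, v, hv, hvp, hvr⟩ := exists_dec Y Z I.subschemeι inferInstance rfl
  obtain ⟨b, hb⟩ : ∃ b, Str k Z b := by
    refine ih ⟨Set.range (I.subschemeι ≫ y), (I.subschemeι ≫ y).isClosedEmbedding.isClosed_range⟩ ?_ Z
      (I.subschemeι ≫ y) inferInstance ?_ rfl
    · obtain ⟨x, hx⟩ := hne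
      rw [← SetLike.coe_ssubset_coe, ← hC]
      refine ⟨?_, fun h => ?_⟩
      · rintro _ ⟨a, rfl⟩
        exact ⟨I.subschemeι a, by simp⟩
      · obtain ⟨a, ha⟩ := h ⟨r x, rfl⟩
        have : I.subschemeι a = r x := y.isClosedEmbedding.injective (by simpa using ha)
        obtain ⟨x', hx', e⟩ : r x ∈ r '' (sm : Set Y.X.nilradical.subscheme)ᶜ :=
          hIr ▸ ⟨a, this⟩
        exact hx' (r.isClosedEmbedding.injective e ▸ hx)
    · rw [Category.assoc, hyp]
  let T : SmFTScheme k :=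
    { V.cl (pullback.fst v r) inferInstance with
      smooth := by
        change Smooth (pullback.fst v r ≫ V.p)
        rw [← hvp, pullback.condition_assoc]
        have : LocallyOfFinitePresentation (pullback.snd v r ≫ r ≫ Y.p) := inferInstance
        rw [← Scheme.Hom.smoothLocus_eq_top_iff, ← Scheme.Hom.preimage_smoothLocus_eq]
        rw [eq_top_iff]
        intro w _
        change pullback.snd v r w ∈ sm
        by_contra hw
        have h1 : v (pullback.fst v r w) ∈ (Set.range I.subschemeι)ᶜ := hvr ▸ Set.mem_range_self _
        apply h1
        rw [hIr]
        refine ⟨pullback.snd v r w, hw, ?_⟩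
        rw [← Scheme.Hom.comp_apply, ← Scheme.Hom.comp_apply, pullback.condition] }
  exact ⟨b + clsSm k T, hb.concat (.of_surj T (pullback.fst v r)
    (inferInstanceAs (IsClosedImmersion (pullback.fst v r)))
    (inferInstanceAs (Surjective (pullback.fst v r))) rfl)
    ⟨I.subschemeι, v, inferInstance, hv, rfl, hvp, hvr⟩⟩

lemma Str.exists [PerfectField k] (X : FTScheme k) : ∃ a, Str k X a :=
  Str.exists_aux X ⊤ X (𝟙 _) inferInstance (by simp)
    (Set.range_eq_univ.mpr (fun a => ⟨a, rfl⟩))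

/-- Claim B -/
lemma Str.split [PerfectField k] {X Z V : FTScheme k} {a : K0VarSm k} (h : Str k X a)
    (hd : Dec X Z V) : ∃ b c, Str k Z b ∧ Str k V c ∧ a = b + c := by
  induction h generalizing Z V with
  | empty X h =>
    obtain ⟨z, v, -⟩ := hd
    exact ⟨0, 0, .empty _ ⟨fun x => h.false (z x)⟩, .empty _ ⟨fun x => h.false (v x)⟩, by simp⟩
  | step X S U a h hU ih =>
    obtain ⟨SZ, SV, UZ, UV, d1, d2, d3, d4⟩ := hd.grid h
    obtain ⟨b', c', hb', hc', rfl⟩ := ih d2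
    obtain ⟨s1, h1⟩ := Str.exists SZ
    obtain ⟨s2, h2⟩ := Str.exists SV
    have h3 : s1 + s2 = clsSm k S := (h1.concat h2 d1).eq_clsSm S (𝟙 _) inferInstance inferInstance
      (by simp)
    exact ⟨s1 + b', s2 + c', h1.concat hb' d3, h2.concat hc' d4, by rw [← h3]; abel⟩

lemma Str.eq_zero {X : FTScheme k} {a : K0VarSm k} (h : Str k X a) (hX : IsEmpty X.X) :
    a = 0 := by
  induction h with
  | empty => rfl
  | step X S U a h' hU ih =>
    obtain ⟨s, u, -⟩ := h'
    rw [clsSm_of_isEmpty S ⟨fun x => hX.false (s x)⟩, ih ⟨fun x => hX.false (u x)⟩, zero_add]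

lemma Str.unique [PerfectField k] {X : FTScheme k} {a b : K0VarSm k} (ha : Str k X a)
    (hb : Str k X b) : a = b := by
  induction hb generalizing a with
  | empty X h => exact ha.eq_zero h
  | step X S U b h hU ih =>
    obtain ⟨a1, a2, h1, h2, rfl⟩ := ha.split h
    rw [ih h2, h1.eq_clsSm S (𝟙 _) inferInstance inferInstance (by simp)]

theorem bijective_aux [PerfectField k] :
    ∃ φ : K0VarSm k →+ K0Var k,
      (∀ A : SmFTScheme k, φ (clsSm k A) = clsVar k A.toFTScheme) ∧
      Function.Bijective φ := by
  let φ : K0VarSm k →+ K0Var k := QuotientAddGroup.lift _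
    (FreeAbelianGroup.lift (fun A : SmFTScheme k => clsVar k A.toFTScheme)) (by
      rw [AddSubgroup.closure_le]
      rintro _ (⟨A, B, h, rfl⟩ | ⟨W, Y, U, i, j, h1, h2, h3, h4, h5, rfl⟩)
      · have := clsVar_iso h
        simp [this]
      · have := clsVar_dec (W := W.toFTScheme) (Y := Y.toFTScheme) (U := U.toFTScheme)
          ⟨i, j, h1, h2, h3, h4, h5⟩
        simp [this])
  have hφ (A : SmFTScheme k) : φ (clsSm k A) = clsVar k A.toFTScheme := by
    simp [φ, clsSm]
  choose e he using fun X : FTScheme k => Str.exists X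
  let ψ : K0Var k →+ K0VarSm k := QuotientAddGroup.lift _
    (FreeAbelianGroup.lift e) (by
      rw [AddSubgroup.closure_le]
      rintro _ (⟨A, B, h, rfl⟩ | ⟨W, Y, U, i, j, h1, h2, h3, h4, h5, rfl⟩)
      · have := ((he A).iso h).unique (he B)
        simp [this]
      · have := (he W).unique ((he Y).concat (he U) ⟨i, j, h1, h2, h3, h4, h5⟩)
        simp [this])
  have hψ (A : FTScheme k) : ψ (clsVar k A) = e A := by
    simp [ψ, clsVar]
  have hstr {X : FTScheme k} {a : K0VarSm k} (h : Str k X a) : φ a = clsVar k X := by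
    induction h with
    | empty X h => rw [map_zero, clsVar_of_isEmpty X h]
    | step X S U a h hU ih => rw [map_add, ih, hφ, clsVar_dec h]
  have h1 : ψ.comp φ = AddMonoidHom.id _ := by
    ext A
    change ψ (φ (clsSm k A)) = clsSm k A
    rw [hφ, hψ]
    exact (he _).eq_clsSm A (𝟙 _) inferInstance inferInstance (by simp)
  have h2 : φ.comp ψ = AddMonoidHom.id _ := by
    ext A
    change φ (ψ (clsVar k A)) = clsVar k A
    rw [hψ]
    exact hstr (he A)
  exact ⟨φ, hφ, Function.bijective_iff_has_inverse.mpr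
    ⟨ψ, fun x => DFunLike.congr_fun h1 x, fun x => DFunLike.congr_fun h2 x⟩⟩

end Aux

/-- Let `k` be a perfect field. The canonical group homomorphism
`K′₀(Var_k) → K₀(Var_k)`, sending the class of a smooth finite type `k`-scheme to its
class, is an isomorphism. -/
theorem K0VarSm_to_K0Var_bijective [PerfectField k] :
    ∃ φ : K0VarSm k →+ K0Var k,
      (∀ A : SmFTScheme k, φ (clsSm k A) = clsVar k A.toFTScheme) ∧
      Function.Bijective φ := by
  exact bijective_aux
end
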